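/- Suppose A ≠ H and B ≠ H. Then for every m ∈ ℕ: ∑_{x ∈ Δ*, |x|_β = m, η(x) ∈ H} 2·|Δ|^{−|x|−1} ≤ (1 − 4/|Δ|⁴)^{m/2}, where |x| denotes the length of x and |x|_β the number of occurrences of the letters b and b⁻¹ in x. (The weights x ↦ 2·|Δ|^{−|x|−1} form a probability distribution on {x ∈ Δ* : |x|_β = m}.) -/

import Mathlib

open scoped ENNReal

/-- The alphabet `Δ = Σ ⊔ {b, b⁻¹}`: `Sum.inl s` for a letter `s ∈ Σ`, and
`Sum.inr true = b`, `Sum.inr false = b⁻¹`. -/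
abbrev HNNAlph {H : Type*} (S : Finset H) := {x // x ∈ S} ⊕ Bool

/-- Evaluation of a single letter of `Δ` in the HNN extension. -/
def hnnLetter {H : Type*} [Group H] {A B : Subgroup H} (φ : A ≃* B) {S : Finset H} :
    HNNAlph S → HNNExtension H A B φ
  | Sum.inl s => HNNExtension.of s.val
  | Sum.inr true => HNNExtension.t
  | Sum.inr false => HNNExtension.t⁻¹

/-- The evaluation homomorphism `η : Δ* → G` (on words, as lists of letters). -/
def hnnEval {H : Type*} [Group H] {A B : Subgroup H} (φ : A ≃* B) {S : Finset H}
    (w : List (HNNAlph S)) : HNNExtension H A B φ :=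
  (w.map (hnnLetter φ)).prod

/-- The image of the base group `H` inside the HNN extension. -/
def hnnBase {H : Type*} [Group H] {A B : Subgroup H} (φ : A ≃* B) :
    Subgroup (HNNExtension H A B φ) :=
  MonoidHom.range HNNExtension.of

/-!
The HNN extension `G` acts on normal words, and the number of stable letters of a normal word is a
distance from the base vertex in the Bass–Serre tree. Reading a word of `Δ*` from the right, one
syllable `b^{±1} y` with `y ∈ Σ*` at a time, is a random walk on this tree. Away from the base
vertex, only one sign `b^u` can cancel, and only if `y` lies in a fixed coset of `A` or `B`;
prepending to such a `y` a generator outside the subgroup prevents the cancellation and divides the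
weight by `n = |Δ|`. Hence a step towards the base vertex has probability at most
`n / (2 (n + 1))`, and the potential `λ ^ distance` with `λ² = n / (n + 2)` is multiplied in
expectation by at most `c` per step, where `c² = 1 - 1 / (n + 1)² ≤ 1 - 4 / n⁴`. Words evaluating
into `H` bring the walk back to the base vertex, where the potential is `1`.
-/

open scoped NNReal
open HNNExtension HNNExtension.NormalWord

section ListWeight

variable {α : Type*} (r : ℝ≥0∞)

/-- The weight of a set of words over `α` when a letter has weight `r` and weights multiply along
a word: the generating function of the set, evaluated at `r`. -/
noncomputable def listWeight (Y : Set (List α)) : ℝ≥0∞ :=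
  ∑' y : Y, r ^ y.1.length

theorem listWeight_univ [Fintype α] :
    listWeight r (Set.univ : Set (List α)) = (1 - Fintype.card α * r)⁻¹ := by
  have vectors_of_length (k : ℕ) :
      ∑' y : {y : List α // y.length = k}, r ^ y.1.length = (Fintype.card α * r) ^ k :=
    calc ∑' y : {y : List α // y.length = k}, r ^ y.1.length
        = ∑' _ : List.Vector α k, r ^ k := tsum_congr fun y => by rw [y.2]
      _ = (Fintype.card α * r) ^ k := by
          rw [tsum_fintype, Finset.sum_const, Finset.card_univ, card_vector, nsmul_eq_mul,
            Nat.cast_pow, mul_pow]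
  calc listWeight r (Set.univ : Set (List α))
      = ∑' y : List α, r ^ y.length := tsum_univ fun y : List α => r ^ y.length
    _ = ∑' (k : ℕ) (y : {y : List α // y.length = k}), r ^ y.1.length := by
        rw [← (Equiv.sigmaFiberEquiv (List.length (α := α))).tsum_eq, ENNReal.tsum_sigma']
        rfl
    _ = ∑' k : ℕ, (Fintype.card α * r) ^ k := tsum_congr vectors_of_length
    _ = (1 - Fintype.card α * r)⁻¹ := ENNReal.tsum_geometric _

theorem listWeight_univ_inv_of_eq_card_add_two [Fintype α] {n : ℝ≥0}
    (hn : n = Fintype.card α + 2) :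
    listWeight (n : ℝ≥0∞)⁻¹ (Set.univ : Set (List α)) = n / 2 := by
  have hn0 : (n : ℝ≥0∞) ≠ 0 := by simp [hn]
  rw [listWeight_univ, ← ENNReal.inv_div (by simp) (by simp), div_eq_mul_inv]
  congr 1
  refine ENNReal.sub_eq_of_eq_add (by finiteness) ?_
  rw [← add_mul, ← ENNReal.mul_inv_cancel hn0 ENNReal.coe_ne_top, hn, add_comm 2]
  push_cast
  rfl

theorem listWeight_add_listWeight_compl (Y : Set (List α)) :
    listWeight r Y + listWeight r Yᶜ = listWeight r (Set.univ : Set (List α)) := by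
  rw [listWeight, listWeight, ENNReal.summable.tsum_add_tsum_compl
    (f := fun y : List α => r ^ y.length) ENNReal.summable]
  exact (tsum_univ fun y : List α => r ^ y.length).symm

theorem mul_listWeight_le_of_cons_mem {a : α} {Y Z : Set (List α)}
    (h : ∀ y ∈ Y, a :: y ∈ Z) : r * listWeight r Y ≤ listWeight r Z := by
  let consMap : Y → Z := fun y => ⟨a :: y.1, h y.1 y.2⟩
  have consMap_injective : consMap.Injective := fun y y' hy =>
    Subtype.ext (List.cons_injective (congrArg Subtype.val hy))
  calc r * listWeight r Y = ∑' y : Y, r ^ (consMap y).1.length := by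
        simp only [listWeight, ← ENNReal.tsum_mul_left, consMap, List.length_cons, pow_succ']
    _ ≤ listWeight r Z :=
        ENNReal.tsum_comp_le_tsum_of_injective consMap_injective fun z : Z => r ^ z.1.length

theorem tsum_pow_length_mul_const (p : ℝ≥0∞) :
    ∑' y : List α, r ^ y.length * p = listWeight r (Set.univ : Set (List α)) * p := by
  rw [ENNReal.tsum_mul_right, listWeight, tsum_univ fun y : List α => r ^ y.length]

theorem tsum_pow_length_mul_of_eq_on {f : List α → ℝ≥0∞} {Y : Set (List α)} {p q : ℝ≥0∞}
    (hp : ∀ y ∈ Y, f y = p) (hq : ∀ y ∉ Y, f y = q) :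
    ∑' y, r ^ y.length * f y = listWeight r Y * p + listWeight r Yᶜ * q := by
  rw [← ENNReal.summable.tsum_add_tsum_compl (s := Y) ENNReal.summable, listWeight, listWeight,
    ← ENNReal.tsum_mul_right, ← ENNReal.tsum_mul_right]
  exact congrArg₂ (· + ·) (tsum_congr fun y => by rw [hp y.1 y.2])
    (tsum_congr fun y => by rw [hq y.1 y.2])

/-- The words over `α` that `σ` evaluates into the right coset `C g⁻¹`. With `C = A` or `C = B`,
these are the words that let a stable letter cancel against a normal word with head `g`. -/
def wordsInCoset {H : Type*} [Group H] (σ : α → H) (C : Subgroup H) (g : H) : Set (List α) :=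
  {y | (y.map σ).prod * g ∈ C}

theorem mul_listWeight_wordsInCoset_le {H : Type*} [Group H] {σ : α → H} {C : Subgroup H}
    (hC : ∃ a, σ a ∉ C) (g : H) :
    r * listWeight r (wordsInCoset σ C g) ≤ listWeight r (wordsInCoset σ C g)ᶜ := by
  obtain ⟨a, ha⟩ := hC
  refine mul_listWeight_le_of_cons_mem r (a := a)
    fun y (hy : (y.map σ).prod * g ∈ C) (hay : ((a :: y).map σ).prod * g ∈ C) => ha ?_
  rwa [List.map_cons, List.prod_cons, mul_assoc, C.mul_mem_cancel_right hy] at hay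

end ListWeight

section Syllables

/-- The words over `α ⊕ β` with exactly `m` letters in `β`. For `Δ = Σ ⊔ {b, b⁻¹}` these are the
words `x` with `|x|_β = m`. -/
abbrev WordsWithRightCount (α β : Type*) (m : ℕ) :=
  {x : List (α ⊕ β) // x.countP (fun c => c.isRight) = m}

variable {α β : Type*}

theorem countP_isRight_map_inl (y : List α) :
    (y.map (Sum.inl (β := β))).countP (fun c => c.isRight) = 0 := by
  simp [List.countP_eq_zero]

theorem exists_map_inl_of_countP_isRight_eq_zero {x : List (α ⊕ β)}
    (h : x.countP (fun c => c.isRight) = 0) : ∃ y : List α, x = y.map Sum.inl := by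
  induction x with
  | nil => exact ⟨[], rfl⟩
  | cons a x ih =>
    cases a with
    | inl a =>
      obtain ⟨y, rfl⟩ := ih (by simpa using h)
      exact ⟨a :: y, rfl⟩
    | inr b => simp at h

theorem exists_last_syllable {m : ℕ} {x : List (α ⊕ β)}
    (h : x.countP (fun c => c.isRight) = m + 1) :
    ∃ (x' : List (α ⊕ β)) (u : β) (y : List α),
      x'.countP (fun c => c.isRight) = m ∧ x = x' ++ Sum.inr u :: y.map Sum.inl := by
  induction x using List.reverseRecOn with
  | nil => simp at h
  | append_singleton x a ih =>
    cases a with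
    | inl a =>
      obtain ⟨x', u, y, hx', rfl⟩ := ih (by simpa using h)
      exact ⟨x', u, y ++ [a], hx', by simp⟩
    | inr b => exact ⟨x, b, [], by simpa using h, by simp⟩

theorem tsum_wordsWithRightCount_zero_le (f : List (α ⊕ β) → ℝ≥0∞) :
    ∑' x : WordsWithRightCount α β 0, f x ≤ ∑' y : List α, f (y.map Sum.inl) := by
  let ofLeft : List α → WordsWithRightCount α β 0 :=
    fun y => ⟨y.map Sum.inl, countP_isRight_map_inl y⟩
  have ofLeft_surjective : ofLeft.Surjective := by
    rintro ⟨x, hx⟩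
    obtain ⟨y, rfl⟩ := exists_map_inl_of_countP_isRight_eq_zero hx
    exact ⟨y, rfl⟩
  exact ENNReal.tsum_le_tsum_comp_of_surjective ofLeft_surjective fun x => f x

theorem tsum_wordsWithRightCount_succ_le (m : ℕ) (f : List (α ⊕ β) → ℝ≥0∞) :
    ∑' x : WordsWithRightCount α β (m + 1), f x ≤
      ∑' (u : β) (y : List α) (x : WordsWithRightCount α β m),
        f (x ++ Sum.inr u :: y.map Sum.inl) := by
  let addSyllable : (β × List α) × WordsWithRightCount α β m →
      WordsWithRightCount α β (m + 1) :=
    fun p => ⟨p.2 ++ Sum.inr p.1.1 :: p.1.2.map Sum.inl, by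
      rw [List.countP_append, List.countP_cons_of_pos rfl, p.2.2, countP_isRight_map_inl]⟩
  have addSyllable_surjective : addSyllable.Surjective := by
    rintro ⟨x, hx⟩
    obtain ⟨x', u, y, hx', rfl⟩ := exists_last_syllable hx
    exact ⟨⟨⟨u, y⟩, ⟨x', hx'⟩⟩, rfl⟩
  refine (ENNReal.tsum_le_tsum_comp_of_surjective addSyllable_surjective fun x => f x).trans_eq ?_
  rw [ENNReal.tsum_prod', ENNReal.tsum_prod']

theorem tsum_wordsWithRightCount_smul_le {M X : Type*} [Monoid M] [MulAction M X]
    {e : α ⊕ β → M} {V : X → ℝ≥0∞} {r K c : ℝ≥0∞}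
    (hleft : ∀ v, ∑' y : List α,
      r ^ y.length * V (((y.map Sum.inl).map e).prod • v) ≤ K * V v)
    (hsyllable : ∀ v, ∑' (u : β) (y : List α),
      r ^ (y.length + 1) * V (((Sum.inr u :: y.map Sum.inl).map e).prod • v) ≤ c * V v)
    (m : ℕ) (v : X) :
    ∑' x : WordsWithRightCount α β m, r ^ x.1.length * V ((x.1.map e).prod • v) ≤
      K * c ^ m * V v := by
  induction m generalizing v with
  | zero =>
    refine (tsum_wordsWithRightCount_zero_le
      fun x => r ^ x.length * V ((x.map e).prod • v)).trans ?_
    simpa only [List.length_map, pow_zero, mul_one] using hleft v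
  | succ m ih =>
    set s : β → List α → List (α ⊕ β) := fun u y => Sum.inr u :: y.map Sum.inl with hs
    calc ∑' x : WordsWithRightCount α β (m + 1), r ^ x.1.length * V ((x.1.map e).prod • v)
        ≤ ∑' (u : β) (y : List α) (x : WordsWithRightCount α β m),
            r ^ (x.1 ++ s u y).length * V (((x.1 ++ s u y).map e).prod • v) :=
          tsum_wordsWithRightCount_succ_le m fun x => r ^ x.length * V ((x.map e).prod • v)
      _ = ∑' (u : β) (y : List α), r ^ (y.length + 1) *
            ∑' x : WordsWithRightCount α β m,
              r ^ x.1.length * V ((x.1.map e).prod • ((s u y).map e).prod • v) := by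
          simp only [hs, List.length_append, List.length_cons, List.length_map, List.map_append,
            List.prod_append, mul_smul, pow_add _ (List.length _) (_ + 1),
            ← ENNReal.tsum_mul_left, mul_left_comm, mul_assoc]
      _ ≤ ∑' (u : β) (y : List α), r ^ (y.length + 1) *
            (K * c ^ m * V (((s u y).map e).prod • v)) := by
          gcongr with u y
          exact ih _
      _ = K * c ^ m * ∑' (u : β) (y : List α),
            r ^ (y.length + 1) * V (((s u y).map e).prod • v) := by
          simp only [← ENNReal.tsum_mul_left, mul_left_comm (r ^ _)]
      _ ≤ K * c ^ m * (c * V v) := by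
          gcongr
          exact hsyllable v
      _ = K * c ^ (m + 1) * V v := by ring

end Syllables

section BiasedWalk

variable {n : ℝ≥0}

/-- The base `λ` of the potential `λ ^ distance` for the walk on `ℕ` that steps down with
probability `p = n / (2 (n + 1))` and up with probability `q = 1 - p`: the choice
`λ = √(p / q)` minimizes the expected factor `p λ⁻¹ + q λ`. -/
noncomputable def driftBase (n : ℝ≥0) : ℝ≥0 :=
  NNReal.sqrt (n / (n + 2))

/-- The factor `2 √(p q)`, with `p` and `q` as in `driftBase`, by which a step of the walk
multiplies the expectation of the potential `driftBase n ^ distance`. -/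
noncomputable def driftRate (n : ℝ≥0) : ℝ≥0 :=
  (n + 2) / (n + 1) * driftBase n

theorem driftBase_sq (n : ℝ≥0) : driftBase n ^ 2 = n / (n + 2) :=
  NNReal.sq_sqrt _

theorem driftRate_mul_driftBase (n : ℝ≥0) : driftRate n * driftBase n = n / (n + 1) := by
  rw [driftRate, mul_assoc, ← sq, driftBase_sq]
  field_simp

theorem driftRate_sq_add (n : ℝ≥0) : driftRate n ^ 2 + 1 / (n + 1) ^ 2 = 1 := by
  rw [driftRate, mul_pow, driftBase_sq]
  field_simp
  ring

theorem driftBase_le_driftRate (n : ℝ≥0) : driftBase n ≤ driftRate n := by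
  refine le_mul_of_one_le_left' ?_
  rw [one_le_div (by positivity)]
  gcongr
  norm_num

theorem driftRate_sq_le (hn : 3 ≤ n) :
    (driftRate n : ℝ≥0∞) ^ 2 ≤ 1 - 4 / (n : ℝ≥0∞) ^ 4 := by
  have hn0 : 0 < n := lt_of_lt_of_le (by norm_num) hn
  have two_mul_add_one_le : 2 * (n + 1) ≤ n ^ 2 :=
    calc 2 * (n + 1) = 2 * n + 2 := by ring
      _ ≤ 2 * n + n := by gcongr; exact le_trans (by norm_num) hn
      _ = 3 * n := by ring
      _ ≤ n ^ 2 := by rw [sq]; gcongr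
  have four_div_le : 4 / n ^ 4 ≤ 1 / (n + 1) ^ 2 := by
    rw [div_le_div_iff₀ (by positivity) (by positivity), one_mul]
    calc 4 * (n + 1) ^ 2 = (2 * (n + 1)) ^ 2 := by ring
      _ ≤ (n ^ 2) ^ 2 := by gcongr
      _ = n ^ 4 := by ring
  have rate_sq_add_le : driftRate n ^ 2 + 4 / n ^ 4 ≤ 1 :=
    (add_le_add_right four_div_le _).trans_eq (driftRate_sq_add n)
  have hcoe : 4 / (n : ℝ≥0∞) ^ 4 = ((4 / n ^ 4 : ℝ≥0) : ℝ≥0∞) := by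
    rw [ENNReal.coe_div (pow_ne_zero 4 hn0.ne'), ENNReal.coe_pow, ENNReal.coe_ofNat]
  refine ENNReal.le_sub_of_add_le_right (by finiteness) ?_
  rw [hcoe]
  exact_mod_cast rate_sq_add_le

/-- Of the total syllable weight `n⁻¹ (a + b + n / 2) = 1`, the part `n⁻¹ a` cancels a stable
letter and the rest adds one. -/
theorem inv_mul_add_driftBase_sq_mul_le (hn : n ≠ 0) {a b : ℝ≥0∞} (hab : a + b = n / 2)
    (h : (n : ℝ≥0∞)⁻¹ * a ≤ b) :
    (n : ℝ≥0∞)⁻¹ * (a + driftBase n ^ 2 * (b + n / 2)) ≤ driftRate n * driftBase n := by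
  obtain ⟨ha, hb⟩ := ENNReal.add_ne_top.1 (hab ▸ (by finiteness : (n : ℝ≥0∞) / 2 ≠ ⊤))
  lift a to ℝ≥0 using ha
  lift b to ℝ≥0 using hb
  rw [ENNReal.inv_mul_le_iff (by simpa) (by simp)] at h ⊢
  rw [ENNReal.eq_div_iff (by simp) (by simp)] at hab
  have hhalf : (n : ℝ≥0∞) / 2 = ((n / 2 : ℝ≥0) : ℝ≥0∞) := by
    rw [ENNReal.coe_div two_ne_zero, ENNReal.coe_ofNat]
  rw [hhalf]
  norm_cast at h hab ⊢
  rw [driftBase_sq, driftRate_mul_driftBase]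
  have two_mul_le : 2 * a * (n + 1) ≤ n ^ 2 :=
    calc 2 * a * (n + 1) = 2 * (a * n + a) := by ring
      _ ≤ 2 * (a * n + n * b) := by gcongr
      _ = n * (2 * (a + b)) := by ring
      _ = n ^ 2 := by rw [hab, sq]
  calc a + n / (n + 2) * (b + n / 2)
      = (2 * a + n * (2 * (a + b)) / 2 + n ^ 2 / 2) / (n + 2) := by field_simp; ring
    _ = (2 * a + n ^ 2) / (n + 2) := by rw [hab]; field_simp; ring
    _ ≤ (n ^ 2 / (n + 1) + n ^ 2) / (n + 2) := by
        gcongr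
        rwa [le_div_iff₀ (by positivity)]
    _ = n * (n / (n + 1)) := by field_simp; ring

end BiasedWalk

theorem sum_intUnits_eq_add_neg {M : Type*} [AddCommMonoid M] (f : ℤˣ → M) (u : ℤˣ) :
    ∑ u', f u' = f u + f (-u) := by
  have univ_eq : ∀ u : ℤˣ, Finset.univ = {u, -u} := by decide
  rw [univ_eq u, Finset.sum_pair (units_ne_neg_self u)]

section NormalForms

variable {H : Type*} [Group H] {A B : Subgroup H} (φ : A ≃* B) {d : TransversalPair H A B}

theorem length_unitsSMul_of_cancels {u : ℤˣ} {w : NormalWord d} (h : Cancels u w) :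
    (unitsSMul φ u w).toList.length + 1 = w.toList.length := by
  simp only [unitsSMul, h, dite_true]
  induction w using consRecOn with
  | ofGroup => simp [Cancels] at h
  | cons g u' w _ _ _ => simp [unitsSMulWithCancel]

theorem length_unitsSMul_of_not_cancels {u : ℤˣ} {w : NormalWord d} (h : ¬ Cancels u w) :
    (unitsSMul φ u w).toList.length = w.toList.length + 1 := by
  simp [unitsSMul, h]

theorem toList_smul_empty_of_mem_hnnBase {g : HNNExtension H A B φ} (hg : g ∈ hnnBase φ) :
    (g • (NormalWord.empty : NormalWord d)).toList = [] := by
  obtain ⟨h, rfl⟩ := hg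
  rw [of_smul_eq_smul, group_smul_toList]
  rfl

variable {α : Type*} (σ : α → H)

theorem tsum_unitsSMul_of_head_ne {v : NormalWord d} {u : ℤˣ}
    (hu : v.toList.head?.map Prod.fst ≠ some (-u)) (r l : ℝ≥0∞) :
    ∑' y : List α, r ^ y.length * l ^ (unitsSMul φ u ((y.map σ).prod • v)).toList.length =
      listWeight r (Set.univ : Set (List α)) * l ^ (v.toList.length + 1) := by
  rw [← tsum_pow_length_mul_const]
  refine tsum_congr fun y => ?_
  rw [length_unitsSMul_of_not_cancels φ (w := (y.map σ).prod • v) (fun h => hu h.2),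
    group_smul_toList]

theorem tsum_unitsSMul_of_head_eq {v : NormalWord d} {u : ℤˣ} {k : ℕ}
    (hk : v.toList.length = k + 1) (hu : v.toList.head?.map Prod.fst = some (-u))
    (r l : ℝ≥0∞) :
    ∑' y : List α, r ^ y.length * l ^ (unitsSMul φ u ((y.map σ).prod • v)).toList.length =
      listWeight r (wordsInCoset σ (toSubgroup A B u) v.head) * l ^ k +
        listWeight r (wordsInCoset σ (toSubgroup A B u) v.head)ᶜ * l ^ (k + 2) := by
  refine tsum_pow_length_mul_of_eq_on r (fun y hy => ?_) fun y hy => ?_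
  · have hlength := length_unitsSMul_of_cancels φ (w := (y.map σ).prod • v) ⟨hy, hu⟩
    rw [group_smul_toList, hk, Nat.add_right_cancel_iff] at hlength
    rw [hlength]
  · rw [length_unitsSMul_of_not_cancels φ (w := (y.map σ).prod • v) (fun h => hy h.1),
      group_smul_toList, hk]

variable [Fintype α] {n : ℝ≥0}

theorem sum_tsum_unitsSMul_of_toList_eq_nil (hn : n = Fintype.card α + 2) {v : NormalWord d}
    (hv : v.toList = []) (l : ℝ≥0∞) :
    ∑ u : ℤˣ, ∑' y : List α, (n : ℝ≥0∞)⁻¹ ^ (y.length + 1) *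
      l ^ (unitsSMul φ u ((y.map σ).prod • v)).toList.length = l := by
  have hn0 : (n : ℝ≥0∞) ≠ 0 := by simp [hn]
  have one_sign (u : ℤˣ) := tsum_unitsSMul_of_head_ne φ σ (v := v) (u := u) (by simp [hv])
    (n : ℝ≥0∞)⁻¹ l
  simp only [pow_succ' _ (List.length _), mul_assoc, ENNReal.tsum_mul_left, one_sign, hv,
    listWeight_univ_inv_of_eq_card_add_two hn, sum_intUnits_eq_add_neg _ 1]
  rw [← mul_add, ← add_mul, ENNReal.add_halves, ← mul_assoc,
    ENNReal.inv_mul_cancel hn0 ENNReal.coe_ne_top, one_mul, List.length_nil, pow_zero, mul_one]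

theorem sum_tsum_unitsSMul_of_head_eq (hn : n = Fintype.card α + 2) {v : NormalWord d} {u₀ : ℤˣ}
    {k : ℕ} (hk : v.toList.length = k + 1) (hu : v.toList.head?.map Prod.fst = some (-u₀))
    (l : ℝ≥0∞) :
    ∑ u : ℤˣ, ∑' y : List α, (n : ℝ≥0∞)⁻¹ ^ (y.length + 1) *
        l ^ (unitsSMul φ u ((y.map σ).prod • v)).toList.length =
      l ^ k * ((n : ℝ≥0∞)⁻¹ *
        (listWeight (n : ℝ≥0∞)⁻¹ (wordsInCoset σ (toSubgroup A B u₀) v.head) + l ^ 2 *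
          (listWeight (n : ℝ≥0∞)⁻¹ (wordsInCoset σ (toSubgroup A B u₀) v.head)ᶜ + n / 2))) := by
  have hneg : v.toList.head?.map Prod.fst ≠ some (- -u₀) := by
    rw [hu, Ne, Option.some_inj]
    exact units_ne_neg_self (-u₀)
  simp only [pow_succ' _ (List.length _), mul_assoc, ENNReal.tsum_mul_left]
  rw [sum_intUnits_eq_add_neg _ u₀, tsum_unitsSMul_of_head_eq φ σ hk hu,
    tsum_unitsSMul_of_head_ne φ σ hneg, listWeight_univ_inv_of_eq_card_add_two hn, hk]
  ring

theorem sum_tsum_unitsSMul_le_of_toList_ne_nil (hn : n = Fintype.card α + 2)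
    (hA : ∃ a, σ a ∉ A) (hB : ∃ a, σ a ∉ B) {v : NormalWord d} (hv : v.toList ≠ []) :
    ∑ u : ℤˣ, ∑' y : List α, (n : ℝ≥0∞)⁻¹ ^ (y.length + 1) *
        (driftBase n : ℝ≥0∞) ^ (unitsSMul φ u ((y.map σ).prod • v)).toList.length ≤
      driftRate n * (driftBase n : ℝ≥0∞) ^ v.toList.length := by
  have hn0 : n ≠ 0 := by simp [hn]
  obtain ⟨k, hk⟩ := Nat.exists_eq_succ_of_ne_zero (mt List.length_eq_zero_iff.1 hv)
  obtain ⟨u, hu⟩ : ∃ u : ℤˣ, v.toList.head?.map Prod.fst = some (-u) :=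
    ⟨-(v.toList.head hv).1, by rw [List.head?_eq_some_head hv, Option.map_some, neg_neg]⟩
  have hC : ∃ a, σ a ∉ toSubgroup A B u := by
    rcases Int.units_eq_one_or u with rfl | rfl
    exacts [hA, hB]
  have bias := mul_listWeight_wordsInCoset_le (n : ℝ≥0∞)⁻¹ hC v.head
  have half_weight := (listWeight_add_listWeight_compl (n : ℝ≥0∞)⁻¹
    (wordsInCoset σ (toSubgroup A B u) v.head)).trans
      (listWeight_univ_inv_of_eq_card_add_two hn)
  rw [sum_tsum_unitsSMul_of_head_eq φ σ hn hk hu, hk]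
  calc _ ≤ (driftBase n : ℝ≥0∞) ^ k * (driftRate n * driftBase n) :=
        mul_le_mul_right (inv_mul_add_driftBase_sq_mul_le hn0 half_weight bias) _
    _ = driftRate n * (driftBase n : ℝ≥0∞) ^ (k + 1) := by ring

theorem sum_tsum_unitsSMul_le (hn : n = Fintype.card α + 2)
    (hA : ∃ a, σ a ∉ A) (hB : ∃ a, σ a ∉ B) (v : NormalWord d) :
    ∑ u : ℤˣ, ∑' y : List α, (n : ℝ≥0∞)⁻¹ ^ (y.length + 1) *
        (driftBase n : ℝ≥0∞) ^ (unitsSMul φ u ((y.map σ).prod • v)).toList.length ≤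
      driftRate n * (driftBase n : ℝ≥0∞) ^ v.toList.length := by
  by_cases hv : v.toList = []
  · rw [sum_tsum_unitsSMul_of_toList_eq_nil φ σ hn hv, hv, List.length_nil, pow_zero, mul_one]
    exact_mod_cast driftBase_le_driftRate n
  · exact sum_tsum_unitsSMul_le_of_toList_ne_nil φ σ hn hA hB hv

end NormalForms

section Evaluation

variable {H : Type*} [Group H] {A B : Subgroup H} (φ : A ≃* B) {d : TransversalPair H A B}
  {S : Finset H} {n : ℝ≥0}

theorem hnnEval_map_inl (y : List {x // x ∈ S}) :
    hnnEval φ (y.map Sum.inl) = HNNExtension.of (y.map Subtype.val).prod := by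
  simp only [hnnEval, List.map_map, map_list_prod]
  rfl

theorem hnnEval_syllable_smul (u : Bool) (y : List {x // x ∈ S}) (v : NormalWord d) :
    hnnEval φ (Sum.inr u :: y.map Sum.inl) • v =
      unitsSMul φ (if u then 1 else -1) ((y.map Subtype.val).prod • v) := by
  have hletter : hnnLetter φ (S := S) (Sum.inr u) =
      HNNExtension.t ^ ((if u then 1 else -1 : ℤˣ) : ℤ) := by
    cases u <;> simp [hnnLetter]
  have hcons : hnnEval φ (Sum.inr u :: y.map Sum.inl) =
      hnnLetter φ (Sum.inr u) * hnnEval φ (y.map Sum.inl) := List.prod_cons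
  rw [hcons, mul_smul, hnnEval_map_inl, of_smul_eq_smul, hletter, t_pow_smul_eq_unitsSMul]

theorem tsum_hnnEval_map_inl_smul (hn : n = S.card + 2) (l : ℝ≥0∞) (v : NormalWord d) :
    ∑' y : List {x // x ∈ S},
        (n : ℝ≥0∞)⁻¹ ^ y.length * l ^ (hnnEval φ (y.map Sum.inl) • v).toList.length =
      n / 2 * l ^ v.toList.length := by
  simp only [hnnEval_map_inl, of_smul_eq_smul, group_smul_toList, tsum_pow_length_mul_const]
  rw [listWeight_univ_inv_of_eq_card_add_two (by rw [hn, Fintype.card_coe])]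

theorem tsum_hnnEval_syllable_smul_le (hn : n = S.card + 2) (hA : ¬ (S : Set H) ⊆ A)
    (hB : ¬ (S : Set H) ⊆ B) (v : NormalWord d) :
    ∑' (u : Bool) (y : List {x // x ∈ S}), (n : ℝ≥0∞)⁻¹ ^ (y.length + 1) *
        (driftBase n : ℝ≥0∞) ^ (hnnEval φ (Sum.inr u :: y.map Sum.inl) • v).toList.length ≤
      driftRate n * (driftBase n : ℝ≥0∞) ^ v.toList.length := by
  have exists_letter {C : Subgroup H} (hC : ¬ (S : Set H) ⊆ C) :
      ∃ s : {x // x ∈ S}, s.val ∉ C :=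
    let ⟨s, hs, hsC⟩ := Set.not_subset.1 hC
    ⟨⟨s, hs⟩, hsC⟩
  refine le_of_eq_of_le ?_ (sum_tsum_unitsSMul_le φ Subtype.val (by rw [hn, Fintype.card_coe])
    (exists_letter hA) (exists_letter hB) v)
  simp only [hnnEval_syllable_smul]
  rw [tsum_fintype, Fintype.sum_bool, sum_intUnits_eq_add_neg _ 1, if_pos rfl,
    if_neg Bool.false_ne_true]

theorem tsum_hnnEval_smul_le (hn : n = S.card + 2) (hA : ¬ (S : Set H) ⊆ A)
    (hB : ¬ (S : Set H) ⊆ B) (m : ℕ) (v : NormalWord d) :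
    ∑' x : WordsWithRightCount {x // x ∈ S} Bool m, (n : ℝ≥0∞)⁻¹ ^ x.1.length *
        (driftBase n : ℝ≥0∞) ^ (hnnEval φ x.1 • v).toList.length ≤
      n / 2 * driftRate n ^ m * (driftBase n : ℝ≥0∞) ^ v.toList.length :=
  tsum_wordsWithRightCount_smul_le (e := hnnLetter φ)
    (V := fun w : NormalWord d => (driftBase n : ℝ≥0∞) ^ w.toList.length)
    (fun w => (tsum_hnnEval_map_inl_smul φ hn _ w).le)
    (tsum_hnnEval_syllable_smul_le φ hn hA hB) m v

theorem two_div_pow_length_succ_of_mem_hnnBase (n : ℝ≥0∞) (d : TransversalPair H A B)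
    {x : List (HNNAlph S)} (hx : hnnEval φ x ∈ hnnBase φ) (l : ℝ≥0∞) :
    2 / n ^ (x.length + 1) = 2 * n⁻¹ *
      (n⁻¹ ^ x.length * l ^ (hnnEval φ x • (NormalWord.empty : NormalWord d)).toList.length) := by
  rw [toList_smul_empty_of_mem_hnnBase φ hx, List.length_nil, pow_zero, mul_one, div_eq_mul_inv,
    ENNReal.inv_pow, pow_succ', mul_assoc]

theorem tsum_hnnEval_mem_hnnBase_le (hn : n = S.card + 2) (hA : ¬ (S : Set H) ⊆ A)
    (hB : ¬ (S : Set H) ⊆ B) (m : ℕ) :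
    ∑' x : {x : List (HNNAlph S) //
        x.countP (fun c => c.isRight) = m ∧ hnnEval φ x ∈ hnnBase φ},
      2 / (n : ℝ≥0∞) ^ (x.val.length + 1) ≤ (driftRate n : ℝ≥0∞) ^ m := by
  obtain ⟨d⟩ := TransversalPair.nonempty H A B
  have hn0 : (n : ℝ≥0∞) ≠ 0 := by simp [hn]
  let F : List (HNNAlph S) → ℝ≥0∞ := fun x => (n : ℝ≥0∞)⁻¹ ^ x.length *
    (driftBase n : ℝ≥0∞) ^ (hnnEval φ x • (NormalWord.empty : NormalWord d)).toList.length
  calc ∑' x : {x : List (HNNAlph S) //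
          x.countP (fun c => c.isRight) = m ∧ hnnEval φ x ∈ hnnBase φ},
        2 / (n : ℝ≥0∞) ^ (x.val.length + 1)
      = 2 * (n : ℝ≥0∞)⁻¹ * ∑' x : {x : List (HNNAlph S) //
          x.countP (fun c => c.isRight) = m ∧ hnnEval φ x ∈ hnnBase φ}, F x := by
        rw [← ENNReal.tsum_mul_left]
        exact tsum_congr fun x => two_div_pow_length_succ_of_mem_hnnBase φ n d x.2.2 (driftBase n)
    _ ≤ 2 * (n : ℝ≥0∞)⁻¹ * ∑' x : WordsWithRightCount {x // x ∈ S} Bool m, F x := by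
        gcongr
        exact ENNReal.tsum_mono_subtype F fun x hx => hx.1
    _ ≤ 2 * (n : ℝ≥0∞)⁻¹ * (n / 2 * driftRate n ^ m * (driftBase n : ℝ≥0∞) ^ 0) := by
        gcongr
        exact tsum_hnnEval_smul_le φ hn hA hB m NormalWord.empty
    _ = (2 / n) * (n / 2) * driftRate n ^ m := by
        rw [pow_zero, mul_one, ← mul_assoc, ← div_eq_mul_inv]
    _ = (driftRate n : ℝ≥0∞) ^ m := by
        rw [← ENNReal.inv_div (by simp) (by simp), ENNReal.inv_mul_cancel (by simp [hn0])
          (by finiteness), one_mul]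

end Evaluation

theorem not_subset_of_closure_eq_top {H : Type*} [Group H] {S : Set H}
    (hgen : Subgroup.closure S = ⊤) {C : Subgroup H} (hC : C ≠ ⊤) : ¬ S ⊆ C := fun h =>
  hC (top_le_iff.1 (hgen ▸ (Subgroup.closure_le C).2 h))

theorem stmt14_general {H : Type*} [Group H] (S : Finset H) (A B : Subgroup H) (φ : A ≃* B)
    (hA : ¬ (S : Set H) ⊆ A) (hB : ¬ (S : Set H) ⊆ B) (m : ℕ) :
    ∑' x : {x : List (HNNAlph S) //
        x.countP (fun c => c.isRight) = m ∧ hnnEval φ x ∈ hnnBase φ},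
      2 / (S.card + 2 : ℝ≥0∞) ^ (x.val.length + 1)
      ≤ (1 - 4 / (S.card + 2 : ℝ≥0∞) ^ 4) ^ ((m : ℝ) / 2) := by
  obtain ⟨n, hn⟩ : ∃ n : ℝ≥0, n = S.card + 2 := ⟨_, rfl⟩
  have hcoe : (S.card + 2 : ℝ≥0∞) = n := by rw [hn]; push_cast; rfl
  have three_le : 3 ≤ n := by
    obtain ⟨s, hs, -⟩ := Set.not_subset.1 hA
    rw [hn]
    exact_mod_cast Nat.add_le_add_right (Finset.card_pos.2 ⟨s, hs⟩) 2
  rw [hcoe]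
  calc _ ≤ (driftRate n : ℝ≥0∞) ^ m := tsum_hnnEval_mem_hnnBase_le φ hn hA hB m
    _ = ((driftRate n : ℝ≥0∞) ^ 2) ^ ((m : ℝ) / 2) := by
        rw [← ENNReal.rpow_natCast_mul, Nat.cast_ofNat, mul_div_cancel₀ _ two_ne_zero,
          ENNReal.rpow_natCast]
    _ ≤ _ := by
        gcongr
        exact driftRate_sq_le three_le

/-- If `A ≠ H ≠ B`, then a random word `x ∈ Δ*` with `|x|_β = m` (with weights
`2·|Δ|^{-|x|-1}`) evaluates into `H` with probability at most `(1 - 4/|Δ|⁴)^{m/2}`. -/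
theorem stmt14 {H : Type*} [Group H] (S : Finset H)
    (hsym : ∀ x ∈ S, x⁻¹ ∈ S) (hgen : Subgroup.closure (S : Set H) = ⊤)
    (A B : Subgroup H) (φ : A ≃* B) (hA : A ≠ ⊤) (hB : B ≠ ⊤) (m : ℕ) :
    ∑' x : {x : List (HNNAlph S) //
        x.countP (fun c => c.isRight) = m ∧ hnnEval φ x ∈ hnnBase φ},
      2 / (S.card + 2 : ℝ≥0∞) ^ (x.val.length + 1)
      ≤ (1 - 4 / (S.card + 2 : ℝ≥0∞) ^ 4) ^ ((m : ℝ) / 2) := by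
  exact stmt14_general S A B φ (not_subset_of_closure_eq_top hgen hA)
    (not_subset_of_closure_eq_top hgen hB) m
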